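/- arXiv:2411.07266 — 2 statements merged into one kernel-verified Lean document; each statement's English description precedes it below -/
import Mathlib

section
/- Let G and H be finite simple graphs such that γ_MR(G) ≥ 0 and γ_MR(H) ≥ 0. Then γ_MR(G ∨ H) ≤ γ_MR(G) + γ_MR(H), where G ∨ H denotes the join of G and H. -/
open Finset

namespace MRD

variable {V : Type*}

open scoped Classical

/-- Sum of `f` over the closed neighborhood of `v` in `G`:
`f(N[v]) = \sum_{u \in N[v]} f(u)`. -/
noncomputable def closedNbhdSum [Fintype V] (G : SimpleGraph V) (f : V → ℤ) (v : V) : ℤ :=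
  ∑ u ∈ Finset.univ.filter (fun u => G.Adj v u ∨ u = v), f u

/-- `f : V → {-1, 1, 2}` is a Majority Roman Dominating Function (MRDF) on `G`:
(i) `f(N[v]) ≥ 1` for at least half of the vertices, and (ii) every vertex with value `-1`
is adjacent to a vertex with value `2`. -/
noncomputable def IsMRDF [Fintype V] (G : SimpleGraph V) (f : V → ℤ) : Prop :=
  (∀ v, f v = -1 ∨ f v = 1 ∨ f v = 2) ∧
  Fintype.card V ≤ 2 * (Finset.univ.filter (fun v => 1 ≤ closedNbhdSum G f v)).card ∧
  (∀ u, f u = -1 → ∃ w, G.Adj u w ∧ f w = 2)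

/-- The majority Roman domination number `γ_MR(G)`: the minimum weight
`w(f) = ∑_v f(v)` over all MRDFs `f` on `G`. -/
noncomputable def mrdNum [Fintype V] (G : SimpleGraph V) : ℤ :=
  sInf {w : ℤ | ∃ f : V → ℤ, IsMRDF G f ∧ w = ∑ v, f v}

/-- The join `G ∨ H` of two simple graphs: disjoint union plus all edges between the parts. -/
def join {α β : Type*} (G : SimpleGraph α) (H : SimpleGraph β) : SimpleGraph (α ⊕ β) where
  Adj x y :=
    match x, y with
    | .inl a, .inl b => G.Adj a b
    | .inr a, .inr b => H.Adj a b
    | .inl _, .inr _ => True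
    | .inr _, .inl _ => True
  symm := ⟨by rintro (a | a) (b | b) h <;> simp_all [SimpleGraph.adj_comm]⟩
  loopless := ⟨by rintro (a | a) h <;> simp_all⟩

/-- The corona `G ∘ H` of two simple graphs: one copy of `G` and `|V(G)|` copies of `H`,
where the `v`-th vertex of `G` is joined to every vertex of the `v`-th copy of `H`. -/
def corona {α β : Type*} (G : SimpleGraph α) (H : SimpleGraph β) : SimpleGraph (α ⊕ α × β) where
  Adj x y :=
    match x, y with
    | .inl u, .inl v => G.Adj u v
    | .inr p, .inr q => p.1 = q.1 ∧ H.Adj p.2 q.2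
    | .inl u, .inr p => u = p.1
    | .inr p, .inl u => u = p.1
  symm := ⟨by
    rintro (u | ⟨u, x⟩) (v | ⟨v, y⟩) h <;> simp_all [SimpleGraph.adj_comm, eq_comm]⟩
  loopless := ⟨by rintro (u | ⟨u, x⟩) h <;> simp_all⟩

/-- `S` is a dominating set of `G`. -/
def IsDomSet (G : SimpleGraph V) (S : Finset V) : Prop :=
  ∀ v, v ∉ S → ∃ u ∈ S, G.Adj v u

/-- The domination number `γ(G)`. -/
noncomputable def domNum [Fintype V] (G : SimpleGraph V) : ℕ :=
  sInf {k | ∃ S : Finset V, IsDomSet G S ∧ S.card = k}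

/-- A set of vertices is independent if no two of its vertices are adjacent. -/
def IsIndepSet (G : SimpleGraph V) (S : Finset V) : Prop :=
  ∀ a ∈ S, ∀ b ∈ S, ¬ G.Adj a b

/-- The independence number `β₀(G)`. -/
noncomputable def indepNum [Fintype V] (G : SimpleGraph V) : ℕ :=
  sSup {k | ∃ S : Finset V, IsIndepSet G S ∧ S.card = k}

/-- The cocktail party graph `K_{2n} - M` (complete graph minus a perfect matching),
realized on `Fin n × Fin 2`: `(i,a)` and `(j,b)` are adjacent iff `i ≠ j`. -/
def cocktail (n : ℕ) : SimpleGraph (Fin n × Fin 2) where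
  Adj x y := x.1 ≠ y.1
  symm := ⟨fun _ _ h => h.symm⟩
  loopless := ⟨fun _ h => h rfl⟩

end MRD

/-!
Place minimum MRDFs `f` on `G` and `g` on `H` side by side. In the join every vertex of `G` also
sees all of `H`, so its closed neighborhood sum grows by the weight of `g`, and symmetrically for
the vertices of `H`. Since both weights are nonnegative, every vertex whose sum was at least `1`
keeps a sum of at least `1`, so the majorities in `G` and `H` add up to a majority in the join.
-/

namespace MRD

section ClosedNeighborhood

variable {V : Type*} [Fintype V] {G : SimpleGraph V} {f : V → ℤ} {u v : V}

open Classical in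
/-- The closed neighborhood `N[v]` of `v` in `G`, with the same (classical) filter as in
`closedNbhdSum`, so that `closedNbhdSum G f v` is definitionally the sum of `f` over it. -/
noncomputable def closedNbhd (G : SimpleGraph V) (v : V) : Finset V :=
  Finset.univ.filter fun u => G.Adj v u ∨ u = v

@[simp]
theorem mem_closedNbhd : u ∈ closedNbhd G v ↔ G.Adj v u ∨ u = v := by
  simp [closedNbhd]

theorem closedNbhdSum_eq_sum_closedNbhd (G : SimpleGraph V) (f : V → ℤ) (v : V) :
    closedNbhdSum G f v = ∑ u ∈ closedNbhd G v, f u :=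
  rfl

theorem closedNbhdSum_pos (hf : ∀ u, 0 < f u) (v : V) : 0 < closedNbhdSum G f v := by
  rw [closedNbhdSum_eq_sum_closedNbhd]
  exact Finset.sum_pos (fun u _ => hf u) ⟨v, mem_closedNbhd.mpr (.inr rfl)⟩

/-- The set of vertices `v` with `f(N[v]) ≥ 1`. Condition (i) of `IsMRDF G f` is definitionally
`Fintype.card V ≤ 2 * (positiveVerts G f).card`. -/
noncomputable def positiveVerts (G : SimpleGraph V) (f : V → ℤ) : Finset V :=
  Finset.univ.filter fun v => 1 ≤ closedNbhdSum G f v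

@[simp]
theorem mem_positiveVerts : v ∈ positiveVerts G f ↔ 1 ≤ closedNbhdSum G f v := by
  simp [positiveVerts]

theorem positiveVerts_eq_univ (hf : ∀ u, 0 < f u) : positiveVerts G f = Finset.univ :=
  Finset.eq_univ_iff_forall.mpr fun v => mem_positiveVerts.mpr (closedNbhdSum_pos hf v)

end ClosedNeighborhood

section MinimumWeight

variable {V : Type*} [Fintype V] {G : SimpleGraph V} {f : V → ℤ}

theorem isMRDF_one (G : SimpleGraph V) : IsMRDF G 1 := by
  have hcard : (positiveVerts G (1 : V → ℤ)).card = Fintype.card V := by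
    rw [positiveVerts_eq_univ (f := 1) fun _ => one_pos, Finset.card_univ]
  refine ⟨fun _ => .inr (.inl rfl), ?_, fun u hu => absurd hu (by simp)⟩
  exact hcard.ge.trans (Nat.le_mul_of_pos_left _ two_pos)

theorem IsMRDF.neg_card_le_sum (hf : IsMRDF G f) : -(Fintype.card V : ℤ) ≤ ∑ v, f v := by
  have hge (v : V) : -1 ≤ f v := by
    rcases hf.1 v with h | h | h <;> omega
  calc -(Fintype.card V : ℤ) = ∑ _v : V, (-1 : ℤ) := by simp
    _ ≤ ∑ v, f v := Finset.sum_le_sum fun v _ => hge v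

theorem bddBelow_isMRDF_weights (G : SimpleGraph V) :
    BddBelow {w : ℤ | ∃ f : V → ℤ, IsMRDF G f ∧ w = ∑ v, f v} := by
  refine ⟨-(Fintype.card V : ℤ), ?_⟩
  rintro _ ⟨f, hf, rfl⟩
  exact hf.neg_card_le_sum

theorem IsMRDF.mrdNum_le_sum (hf : IsMRDF G f) : mrdNum G ≤ ∑ v, f v :=
  csInf_le (bddBelow_isMRDF_weights G) ⟨f, hf, rfl⟩

theorem exists_isMRDF_mrdNum_eq_sum (G : SimpleGraph V) :
    ∃ f : V → ℤ, IsMRDF G f ∧ mrdNum G = ∑ v, f v :=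
  Int.csInf_mem (s := {w : ℤ | ∃ f : V → ℤ, IsMRDF G f ∧ w = ∑ v, f v})
    ⟨_, 1, isMRDF_one G, rfl⟩ (bddBelow_isMRDF_weights G)

end MinimumWeight

section Adjacency

variable {α β : Type*} {G : SimpleGraph α} {H : SimpleGraph β}

@[simp]
theorem join_adj_inl_inl {a a' : α} : (join G H).Adj (.inl a) (.inl a') ↔ G.Adj a a' :=
  Iff.rfl

@[simp]
theorem join_adj_inr_inr {b b' : β} : (join G H).Adj (.inr b) (.inr b') ↔ H.Adj b b' :=
  Iff.rfl

@[simp]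
theorem join_adj_inl_inr {a : α} {b : β} : (join G H).Adj (.inl a) (.inr b) :=
  trivial

@[simp]
theorem join_adj_inr_inl {a : α} {b : β} : (join G H).Adj (.inr b) (.inl a) :=
  trivial

end Adjacency

section Join

variable {α β : Type*} [Fintype α] [Fintype β] {G : SimpleGraph α} {H : SimpleGraph β}
  {f : α ⊕ β → ℤ}

theorem closedNbhd_join_inl (G : SimpleGraph α) (H : SimpleGraph β) (a : α) :
    closedNbhd (join G H) (.inl a) = (closedNbhd G a).disjSum Finset.univ := by
  ext (u | u) <;> simp

theorem closedNbhd_join_inr (G : SimpleGraph α) (H : SimpleGraph β) (b : β) :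
    closedNbhd (join G H) (.inr b) = Finset.univ.disjSum (closedNbhd H b) := by
  ext (u | u) <;> simp

theorem closedNbhdSum_join_inl (G : SimpleGraph α) (H : SimpleGraph β) (f : α ⊕ β → ℤ) (a : α) :
    closedNbhdSum (join G H) f (.inl a) =
      closedNbhdSum G (f ∘ Sum.inl) a + ∑ b, f (.inr b) := by
  simp only [closedNbhdSum_eq_sum_closedNbhd, closedNbhd_join_inl, Finset.sum_disjSum,
    Function.comp_apply]

theorem closedNbhdSum_join_inr (G : SimpleGraph α) (H : SimpleGraph β) (f : α ⊕ β → ℤ) (b : β) :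
    closedNbhdSum (join G H) f (.inr b) =
      ∑ a, f (.inl a) + closedNbhdSum H (f ∘ Sum.inr) b := by
  simp only [closedNbhdSum_eq_sum_closedNbhd, closedNbhd_join_inr, Finset.sum_disjSum,
    Function.comp_apply]

theorem disjSum_positiveVerts_subset_join
    (hα : 0 ≤ ∑ a, f (.inl a)) (hβ : 0 ≤ ∑ b, f (.inr b)) :
    (positiveVerts G (f ∘ Sum.inl)).disjSum (positiveVerts H (f ∘ Sum.inr)) ⊆
      positiveVerts (join G H) f := by
  rintro (a | b) hv
  · rw [Finset.inl_mem_disjSum, mem_positiveVerts] at hv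
    rw [mem_positiveVerts, closedNbhdSum_join_inl]
    exact le_add_of_le_of_nonneg hv hβ
  · rw [Finset.inr_mem_disjSum, mem_positiveVerts] at hv
    rw [mem_positiveVerts, closedNbhdSum_join_inr]
    exact le_add_of_nonneg_of_le hα hv

theorem card_positiveVerts_add_card_le_join
    (hα : 0 ≤ ∑ a, f (.inl a)) (hβ : 0 ≤ ∑ b, f (.inr b)) :
    (positiveVerts G (f ∘ Sum.inl)).card + (positiveVerts H (f ∘ Sum.inr)).card ≤
      (positiveVerts (join G H) f).card := by
  rw [← Finset.card_disjSum]
  exact Finset.card_le_card (disjSum_positiveVerts_subset_join hα hβ)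

theorem isMRDF_join (hG : IsMRDF G (f ∘ Sum.inl)) (hH : IsMRDF H (f ∘ Sum.inr))
    (hα : 0 ≤ ∑ a, f (.inl a)) (hβ : 0 ≤ ∑ b, f (.inr b)) :
    IsMRDF (join G H) f := by
  obtain ⟨hG_val, hG_card, hG_dom⟩ := hG
  obtain ⟨hH_val, hH_card, hH_dom⟩ := hH
  refine ⟨Sum.forall.mpr ⟨hG_val, hH_val⟩, ?_, ?_⟩
  · calc Fintype.card (α ⊕ β) = Fintype.card α + Fintype.card β := Fintype.card_sum
      _ ≤ 2 * (positiveVerts G (f ∘ Sum.inl)).card + 2 * (positiveVerts H (f ∘ Sum.inr)).card :=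
        add_le_add hG_card hH_card
      _ = 2 * ((positiveVerts G (f ∘ Sum.inl)).card + (positiveVerts H (f ∘ Sum.inr)).card) :=
        (mul_add ..).symm
      _ ≤ 2 * (positiveVerts (join G H) f).card :=
        Nat.mul_le_mul_left 2 (card_positiveVerts_add_card_le_join hα hβ)
  · rintro (a | b) hv
    · obtain ⟨w, hadj, hw⟩ := hG_dom a hv
      exact ⟨.inl w, join_adj_inl_inl.mpr hadj, hw⟩
    · obtain ⟨w, hadj, hw⟩ := hH_dom b hv
      exact ⟨.inr w, join_adj_inr_inr.mpr hadj, hw⟩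

end Join

end MRD

/-- If `γ_MR(G) ≥ 0` and `γ_MR(H) ≥ 0`, then `γ_MR(G ∨ H) ≤ γ_MR(G) + γ_MR(H)`. -/
theorem mrdNum_join_le {α β : Type*} [Fintype α] [Fintype β]
    (G : SimpleGraph α) (H : SimpleGraph β)
    (hG : 0 ≤ MRD.mrdNum G) (hH : 0 ≤ MRD.mrdNum H) :
    MRD.mrdNum (MRD.join G H) ≤ MRD.mrdNum G + MRD.mrdNum H := by
  obtain ⟨f, hf, hGf⟩ := MRD.exists_isMRDF_mrdNum_eq_sum G
  obtain ⟨g, hg, hHg⟩ := MRD.exists_isMRDF_mrdNum_eq_sum H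
  have hfg : MRD.IsMRDF (MRD.join G H) (Sum.elim f g) :=
    MRD.isMRDF_join hf hg (hGf ▸ hG) (hHg ▸ hH)
  calc MRD.mrdNum (MRD.join G H) ≤ ∑ v, Sum.elim f g v := hfg.mrdNum_le_sum
    _ = ∑ a, f a + ∑ b, g b := Fintype.sum_sum_type _
    _ = MRD.mrdNum G + MRD.mrdNum H := by rw [hGf, hHg]
end

section
/- For every n ≥ 12, the complement of the path P_n on n vertices satisfies γ_MR(P̄_n) = −1. -/
open Finset

/-!
The closed neighbourhood of `v` in `Gᶜ` is the complement of the open neighbourhood of `v` in `G`.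
So a vertex `v` with `f(N[v]) ≥ 1` in `Gᶜ` gives `w(f) ≥ 1 + f(N_G(v)) ≥ 1 - deg_G v`, which is at
least `-1` for a path.

Weight `-1` is attained by giving `-1` to an initial block of `⌈n / 2⌉ + 2` vertices of the path:
at weight `-1`, an interior vertex `v` of that block has `f(N[v]) = -1 + 2 = 1` in `Gᶜ`. Bringing
the weight up to `-1` takes three values `2` for even `n` and four for odd `n`; the remaining
`⌊n / 2⌋ - 2` vertices have room for them when `n = 10` or `n ≥ 12`.
-/

namespace MRD

section Complement

variable {V : Type*} [Fintype V]

lemma closedNbhdSum_compl (G : SimpleGraph V) (f : V → ℤ) (v : V)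
    [Fintype (G.neighborSet v)] :
    closedNbhdSum Gᶜ f v = ∑ u, f u - ∑ u ∈ G.neighborFinset v, f u := by
  classical
  rw [← sum_compl_add_sum (G.neighborFinset v) f, add_sub_cancel_right, closedNbhdSum]
  refine sum_congr ?_ fun _ _ ↦ rfl
  ext u
  have not_adj_of_eq : u = v → ¬ G.Adj v u := by rintro rfl; exact G.irrefl
  simp only [mem_filter, mem_univ, true_and, SimpleGraph.compl_adj, mem_compl,
    SimpleGraph.mem_neighborFinset]
  tauto

variable {G : SimpleGraph V} {f : V → ℤ}

lemma closedNbhdSum_compl_eq_add_degree {v : V} [Fintype (G.neighborSet v)]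
    (hf : ∀ u, G.Adj v u → f u = -1) :
    closedNbhdSum Gᶜ f v = ∑ u, f u + G.degree v := by
  rw [closedNbhdSum_compl,
    sum_congr rfl fun u hu ↦ hf u ((G.mem_neighborFinset v u).mp hu)]
  simp

lemma IsMRDF.neg_one_le (hf : IsMRDF G f) (v : V) : -1 ≤ f v := by
  rcases hf.1 v with h | h | h <;> omega

lemma IsMRDF.exists_one_le_closedNbhdSum [Nonempty V] (hf : IsMRDF G f) :
    ∃ v, 1 ≤ closedNbhdSum G f v := by
  have hcard := hf.2.1
  have hpos : 0 < Fintype.card V := Fintype.card_pos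
  obtain ⟨v, hv⟩ := card_pos.mp (Nat.pos_of_mul_pos_left (hpos.trans_le hcard))
  exact ⟨v, (mem_filter.mp hv).2⟩

theorem IsMRDF.one_sub_le_sum_of_compl [Nonempty V] [G.LocallyFinite] {d : ℕ}
    (hf : IsMRDF Gᶜ f) (hd : ∀ v, G.degree v ≤ d) : 1 - (d : ℤ) ≤ ∑ v, f v := by
  obtain ⟨v, hv⟩ := hf.exists_one_le_closedNbhdSum
  rw [closedNbhdSum_compl] at hv
  have hnbrs : -(G.degree v : ℤ) ≤ ∑ u ∈ G.neighborFinset v, f u := by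
    simpa using card_nsmul_le_sum (G.neighborFinset v) f (-1) fun u _ ↦ hf.neg_one_le u
  have := hd v
  omega

end Complement

section Path

variable {n k t : ℕ}

lemma degree_pathGraph_le_two (v : Fin n) [Fintype ((SimpleGraph.pathGraph n).neighborSet v)] :
    (SimpleGraph.pathGraph n).degree v ≤ 2 := by
  have hsub : ((SimpleGraph.pathGraph n).neighborFinset v).map Fin.valEmbedding ⊆
      {v.val + 1, v.val - 1} := by
    intro i hi
    obtain ⟨u, hu, rfl⟩ := mem_map.mp hi
    rw [SimpleGraph.mem_neighborFinset, SimpleGraph.pathGraph_adj] at hu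
    simp only [Fin.valEmbedding_apply, mem_insert, mem_singleton]
    omega
  rw [← SimpleGraph.card_neighborFinset_eq_degree, ← card_map Fin.valEmbedding]
  exact (card_le_card hsub).trans card_le_two

lemma degree_pathGraph_eq_two {v : Fin n} [Fintype ((SimpleGraph.pathGraph n).neighborSet v)]
    (hv : 0 < v.val) (hvn : v.val + 1 < n) : (SimpleGraph.pathGraph n).degree v = 2 := by
  have hnbrs : (SimpleGraph.pathGraph n).neighborFinset v =
      {⟨v.val - 1, by omega⟩, ⟨v.val + 1, hvn⟩} := by
    ext u
    simp only [SimpleGraph.mem_neighborFinset, SimpleGraph.pathGraph_adj, mem_insert,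
      mem_singleton, Fin.ext_iff]
    omega
  rw [← SimpleGraph.card_neighborFinset_eq_degree, hnbrs, card_pair]
  simp only [ne_eq, Fin.mk.injEq]
  omega

/-- The labelling of the vertices `0, 1, 2, …` of a path by `k` values `-1`, followed by `t` values
`2`, followed by values `1`. It is defined on all of `ℕ` and restricted to `Fin n` where needed. -/
def blockLabelling (k t i : ℕ) : ℤ :=
  if i < k then -1 else if i < k + t then 2 else 1

lemma blockLabelling_of_lt {i : ℕ} (hi : i < k) : blockLabelling k t i = -1 :=
  if_pos hi

lemma blockLabelling_of_le_of_lt {i : ℕ} (hk : k ≤ i) (hi : i < k + t) :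
    blockLabelling k t i = 2 := by
  rw [blockLabelling, if_neg hk.not_gt, if_pos hi]

lemma blockLabelling_of_le {i : ℕ} (hi : k + t ≤ i) : blockLabelling k t i = 1 := by
  rw [blockLabelling, if_neg (by omega), if_neg hi.not_gt]

lemma blockLabelling_eq_neg_one_iff {i : ℕ} : blockLabelling k t i = -1 ↔ i < k := by
  unfold blockLabelling
  split_ifs <;> simp_all

lemma sum_blockLabelling (hkt : k + t ≤ n) :
    ∑ i : Fin n, blockLabelling k t i = n + t - 2 * k := by
  obtain ⟨m, rfl⟩ := Nat.exists_eq_add_of_le hkt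
  have hneg : ∑ i ∈ range k, blockLabelling k t i = -k := by
    rw [sum_congr rfl fun i hi ↦ blockLabelling_of_lt (mem_range.mp hi)]
    simp
  have htwo : ∑ i ∈ range t, blockLabelling k t (k + i) = 2 * t := by
    rw [sum_congr rfl fun i hi ↦ blockLabelling_of_le_of_lt (Nat.le_add_right k i)
      (Nat.add_lt_add_left (mem_range.mp hi) k)]
    simp [mul_comm]
  have hone : ∑ i ∈ range m, blockLabelling k t (k + t + i) = m := by
    rw [sum_congr rfl fun i _ ↦ blockLabelling_of_le (Nat.le_add_right (k + t) i)]
    simp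
  rw [Fin.sum_univ_eq_sum_range (blockLabelling k t), sum_range_add, sum_range_add, hneg, htwo,
    hone]
  push_cast
  ring

lemma one_le_closedNbhdSum_blockLabelling (hkn : k ≤ n)
    (hsum : ∑ i : Fin n, blockLabelling k t i = -1) {v : Fin n} (hv : 0 < v.val)
    (hvk : v.val + 1 < k) :
    1 ≤ closedNbhdSum (SimpleGraph.pathGraph n)ᶜ (fun i ↦ blockLabelling k t i) v := by
  classical
  have hnbrs (u : Fin n) (hu : (SimpleGraph.pathGraph n).Adj v u) :
      blockLabelling k t u = -1 := by
    rw [SimpleGraph.pathGraph_adj] at hu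
    exact blockLabelling_of_lt (by omega)
  rw [closedNbhdSum_compl_eq_add_degree hnbrs, hsum, degree_pathGraph_eq_two hv (by omega)]
  norm_num

theorem isMRDF_blockLabelling (ht : 3 ≤ t) (hkt : k + t ≤ n) (hweight : n + t + 1 = 2 * k) :
    IsMRDF (SimpleGraph.pathGraph n)ᶜ (fun i ↦ blockLabelling k t i) := by
  have hsum : ∑ i : Fin n, blockLabelling k t i = -1 := by
    rw [sum_blockLabelling hkt]
    omega
  -- The vertex `k` would not do as a neighbour in the complement: it misses `k - 1`.
  refine ⟨fun v ↦ ?_, ?_, fun u hu ↦ ⟨⟨k + 1, by omega⟩, ?_, ?_⟩⟩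
  · simp only [blockLabelling]
    split_ifs <;> simp
  · let interior : Finset (Fin n) := Ioo ⟨0, by omega⟩ ⟨k - 1, by omega⟩
    have hcard : n ≤ 2 * #interior := by
      rw [Fin.card_Ioo]
      dsimp only
      omega
    rw [Fintype.card_fin]
    refine hcard.trans (Nat.mul_le_mul_left 2 (card_le_card fun v hv ↦ ?_))
    simp only [interior, mem_Ioo, Fin.lt_def] at hv
    exact mem_filter.mpr ⟨mem_univ v,
      one_le_closedNbhdSum_blockLabelling (by omega) hsum hv.1 (by omega)⟩
  · rw [blockLabelling_eq_neg_one_iff] at hu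
    simp only [SimpleGraph.compl_adj, SimpleGraph.pathGraph_adj, Fin.ext_iff, ne_eq]
    omega
  · exact blockLabelling_of_le_of_lt (Nat.le_succ k) (Nat.add_lt_add_left (by omega) k)

end Path

end MRD

theorem mrdNum_compl_path_general (n : ℕ) (hn : 10 ≤ n) (hn_ne : n ≠ 11) :
    MRD.mrdNum (SimpleGraph.pathGraph n)ᶜ = -1 := by
  classical
  obtain ⟨k, t, ht, hkt, hweight⟩ : ∃ k t, 3 ≤ t ∧ k + t ≤ n ∧ n + t + 1 = 2 * k :=
    ⟨(n + 1) / 2 + 2, n % 2 + 3, by omega, by omega, by omega⟩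
  refine IsLeast.csInf_eq ⟨⟨_, MRD.isMRDF_blockLabelling ht hkt hweight, ?_⟩, ?_⟩
  · rw [MRD.sum_blockLabelling hkt]
    omega
  · rintro w ⟨f, hf, rfl⟩
    have : Nonempty (Fin n) := ⟨⟨0, by omega⟩⟩
    exact hf.one_sub_le_sum_of_compl (d := 2) fun v ↦ MRD.degree_pathGraph_le_two v

/-- For `n ≥ 12`, the complement of the path on `n` vertices satisfies
`γ_MR(P̄_n) = -1`. -/
theorem mrdNum_compl_path (n : ℕ) (hn : 12 ≤ n) :
    MRD.mrdNum (SimpleGraph.pathGraph n)ᶜ = -1 :=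
  mrdNum_compl_path_general n (by omega) (by omega)
end
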